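/- Let σ be the α-approximate adaptive greedy policy and let π* be an adaptive covering policy of minimum expected cost. If the utility function f is real-valued, then E[C(σ)] ≤ α(ln(Q/η) + 1)·E[C(π*)]. -/

import Mathlib

/-!
Common framework for the Stochastic Submodular Cover problem
(Hellerstein–Kletenik–Parthasarathy, "A Tight Bound for Stochastic Submodular Cover").
-/

namespace SSC

open Finset
open scoped Classical

noncomputable section

variable {E O : Type*}

/-- A subrealization assigns to each item either a state or `none` (unassigned).
A realization corresponds to the case where every item is assigned. -/
abbrev Sub (E O : Type*) := E → Option O

/-- `subext ψ ψ'` means `ψ ⊆ ψ'` as partial assignments of states to items. -/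
def subext (ψ ψ' : Sub E O) : Prop := ∀ e o, ψ e = some o → ψ' e = some o

/-- `ssubext ψ ψ'` means `ψ ⊂ ψ'` (strict extension). -/
def ssubext (ψ ψ' : Sub E O) : Prop := subext ψ ψ' ∧ ψ ≠ ψ'

/-- Extend a subrealization `ψ` by assigning state `o` to item `e`. -/
def updateSub [DecidableEq E] (ψ : Sub E O) (e : E) (o : O) : Sub E O :=
  fun e' => if e' = e then some o else ψ e'

/-- View a (full) realization as a subrealization. -/
def toSub (φ : E → O) : Sub E O := fun e => some (φ e)

variable [Fintype E] [DecidableEq E] [Fintype O] [DecidableEq O]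

/-- An instance of the Stochastic Submodular Cover problem: positive item costs `c`,
a probability mass function `p` on realizations with mutually independent item states,
and a utility function `f` on subrealizations which is zero on the empty subrealization,
nonnegative, monotone and submodular (pointwise polymatroid), and equal to the goal
value `Q > 0` on every full realization (coverability). -/
structure Problem (E O : Type*) [Fintype E] [DecidableEq E] [Fintype O] [DecidableEq O] where
  c : E → ℝ
  c_pos : ∀ e, 0 < c e
  p : (E → O) → ℝ
  p_nonneg : ∀ φ, 0 ≤ p φ
  p_sum : ∑ φ : E → O, p φ = 1
  indep : ∀ φ : E → O, p φ = ∏ e : E, ∑ φ' : E → O, if φ' e = φ e then p φ' else 0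
  f : Sub E O → ℝ
  f_nonneg : ∀ ψ, 0 ≤ f ψ
  f_empty : f (fun _ => none) = 0
  f_mono : ∀ ψ ψ' : Sub E O, subext ψ ψ' → f ψ ≤ f ψ'
  f_submod : ∀ (ψ ψ' : Sub E O) (e : E) (o : O), subext ψ ψ' → ψ' e = none →
      f (updateSub ψ' e o) - f ψ' ≤ f (updateSub ψ e o) - f ψ
  Q : ℝ
  Q_pos : 0 < Q
  f_cover : ∀ φ : E → O, f (toSub φ) = Q

variable (M : Problem E O)

/-- Expectation of a random variable `X` with respect to the random realization `Φ`. -/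
def Ex (X : (E → O) → ℝ) : ℝ := ∑ φ : E → O, M.p φ * X φ

/-- Probability of an event `A` of the random realization `Φ`. -/
def Pr (A : (E → O) → Prop) : ℝ := ∑ φ : E → O, if A φ then M.p φ else 0

/-- Conditional expectation `E[X | A]`. -/
def cEx (X : (E → O) → ℝ) (A : (E → O) → Prop) : ℝ :=
  (∑ φ : E → O, if A φ then M.p φ * X φ else 0) / Pr M A

/-- The random marginal increase in utility `F_ψ(e)` from observing the state of `e`. -/
def Fm (ψ : Sub E O) (e : E) (φ : E → O) : ℝ := M.f (updateSub ψ e (φ e)) - M.f ψ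

/-- The unit price `υ(e|ψ) = c(e) / E[F_ψ(e)]`. -/
def price (ψ : Sub E O) (e : E) : ℝ := M.c e / Ex M (Fm M ψ e)

/-- An adaptive covering policy: at every subrealization `ψ` with `f ψ < Q` it selects an
item outside `dom ψ`. -/
def IsPolicy (π : Sub E O → E) : Prop := ∀ ψ : Sub E O, M.f ψ < M.Q → ψ (π ψ) = none

/-- The `α`-approximate adaptive greedy policy: at every `ψ` with `f ψ < Q` the unit price of
the selected item `σ ψ` is at most `α` times the minimum unit price, i.e.
`υ(σ ψ | ψ) ≤ α · υ(e | ψ)` for every `e ∉ dom ψ`, written multiplicatively so that infinite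
unit prices (zero expected marginal utility) are handled correctly. -/
def IsGreedy (α : ℝ) (σ : Sub E O → E) : Prop :=
  IsPolicy M σ ∧
    ∀ ψ : Sub E O, M.f ψ < M.Q → ∀ e : E, ψ e = none →
      M.c (σ ψ) * Ex M (Fm M ψ e) ≤ α * M.c e * Ex M (Fm M ψ (σ ψ))

/-- One step of executing policy `π` on realization `φ`. -/
def stepPol (π : Sub E O → E) (φ : E → O) (ψ : Sub E O) : Sub E O :=
  if M.f ψ < M.Q then updateSub ψ (π ψ) (φ (π ψ)) else ψ

/-- The subrealization reached after `n` steps of executing `π` on `φ`. -/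
def execAux (π : Sub E O → E) (φ : E → O) : ℕ → Sub E O
  | 0 => fun _ => none
  | n + 1 => stepPol M π φ (execAux π φ n)

/-- The cover `Ψ(π)` constructed by executing `π` on realization `φ`. -/
def cover (π : Sub E O → E) (φ : E → O) : Sub E O := execAux M π φ (Fintype.card E)

/-- `ψ` is visited when executing `π` on realization `φ`. -/
def visits (π : Sub E O → E) (φ : E → O) (ψ : Sub E O) : Prop := ∃ n, execAux M π φ n = ψ

/-- The set `S(π)` of items selected when executing `π` on `φ`. -/
def Ssel (π : Sub E O → E) (φ : E → O) : Finset E :=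
  Finset.univ.filter fun e => cover M π φ e ≠ none

/-- The cost `C(π)` incurred when executing `π` on `φ`. -/
def C (π : Sub E O → E) (φ : E → O) : ℝ := ∑ e ∈ Ssel M π φ, M.c e

/-- An adaptive covering policy of minimum expected cost. -/
def IsOptimal (π : Sub E O → E) : Prop :=
  IsPolicy M π ∧ ∀ π' : Sub E O → E, IsPolicy M π' → Ex M (C M π) ≤ Ex M (C M π')

/-- `N(π)`: the non-leaf nodes of the decision tree of `π` — subrealizations with
`f ψ < Q` that are visited with positive probability. -/
def Nnodes (π : Sub E O → E) : Finset (Sub E O) :=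
  Finset.univ.filter fun ψ => M.f ψ < M.Q ∧ 0 < Pr M fun φ => visits M π φ ψ

/-- The event `ψ ↝ i`, for a marker located at utility value `b = f(ρ_i)`:
`ψ` is the last subrealization visited by `σ` (on the given realization) whose
utility is at most `b`. -/
def leadsTo (σ : Sub E O → E) (b : ℝ) (ψ : Sub E O) (φ : E → O) : Prop :=
  visits M σ φ ψ ∧ M.f ψ ≤ b ∧
    ∀ ψ' : Sub E O, visits M σ φ ψ' → M.f ψ' ≤ b → subext ψ' ψ

/-- The revenue `λ_i = υ_ψ · ε_i` collected by `σ` from the marker located at utility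
value `b = f(ρ_i)` with interval length `εi`, where `ψ` is the unique subrealization
with `ψ ↝ i`. -/
def lam (σ : Sub E O → E) (b εi : ℝ) (φ : E → O) : ℝ :=
  ∑ ψ : Sub E O, if leadsTo M σ b ψ φ then price M ψ (σ ψ) * εi else 0

/-- The revenue `μ(e)` collected by the optimal policy `πs` from item `e`
(relative to the greedy policy `σ`, both executed on the same realization). -/
def mu (σ πs : Sub E O → E) (e : E) (φ : E → O) : ℝ :=
  if e ∈ Ssel M πs φ then
    if e ∈ Ssel M σ φ then
      ∑ ψ : Sub E O,
        if visits M σ φ ψ ∧ M.f ψ < M.Q ∧ σ ψ = e then price M ψ e * Fm M ψ e φ else 0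
    else M.c e
  else 0

/-- The total revenue `μ*` collected by the optimal policy. -/
def muStar (σ πs : Sub E O → E) (φ : E → O) : ℝ := ∑ e : E, mu M σ πs e φ

/-- Replay of the internal state of policy `πs` in the second stage of the hybrid policy:
starting from the empty subrealization, repeatedly query `πs`; an item whose state is
already recorded in `ψ'` is not re-selected, its recorded state being used instead. -/
def replayAux (πs : Sub E O → E) (ψ' : Sub E O) : ℕ → Sub E O
  | 0 => fun _ => none
  | n + 1 =>
    if M.f (replayAux πs ψ' n) < M.Q then
      match ψ' (πs (replayAux πs ψ' n)) with
      | some o => updateSub (replayAux πs ψ' n) (πs (replayAux πs ψ' n)) o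
      | none => replayAux πs ψ' n
    else replayAux πs ψ' n

/-- The hybrid policy `π^ψ0`: follow `σ` until `ψ0` is visited, then switch to executing
`πs` from the root of its tree, never re-selecting an item of `dom ψ0` and using the
state recorded in `ψ0` instead. -/
def hybrid (σ πs : Sub E O → E) (ψ0 : Sub E O) : Sub E O → E := fun ψ' =>
  if subext ψ0 ψ' then πs (replayAux M πs ψ' (Fintype.card E)) else σ ψ'

/-- `δ⁺_ψ0(e)`: the marginal utility obtained by the hybrid policy `π^ψ0` when it selects
`e` during its second stage, and `0` if `e` is not selected in the second stage. -/
def deltaPlus (σ πs : Sub E O → E) (ψ0 : Sub E O) (e : E) (φ : E → O) : ℝ :=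
  ∑ ψ' : Sub E O,
    if subext ψ0 ψ' ∧ visits M (hybrid M σ πs ψ0) φ ψ' ∧
        ssubext ψ' (cover M (hybrid M σ πs ψ0) φ) ∧ hybrid M σ πs ψ0 ψ' = e
    then Fm M ψ' e φ else 0


/-! ### Helper lemmas -/

/-- Marginal probability that item `e` has state `o`. -/
def qm (e : E) (o : O) : ℝ := ∑ φ : E → O, if φ e = o then M.p φ else 0

theorem qm_nonneg (e : E) (o : O) : 0 ≤ qm M e o := by
  unfold qm
  refine Finset.sum_nonneg fun φ _ => ?_
  split_ifs
  · exact M.p_nonneg φ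
  · exact le_rfl

theorem qm_sum (e : E) : ∑ o : O, qm M e o = 1 := by
  unfold qm
  rw [Finset.sum_comm, ← M.p_sum]
  refine Finset.sum_congr rfl fun φ _ => ?_
  simp

theorem p_eq (φ : E → O) : M.p φ = ∏ e : E, qm M e (φ e) := M.indep φ

theorem p_swap (φ : E → O) (e : E) (o : O) :
    M.p φ * qm M e o = M.p (Function.update φ e o) * qm M e (φ e) := by
  rw [p_eq, p_eq, ← Finset.mul_prod_erase Finset.univ _ (Finset.mem_univ e),
    ← Finset.mul_prod_erase Finset.univ (fun e' => qm M e' (Function.update φ e o e'))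
      (Finset.mem_univ e)]
  have : ∏ x ∈ Finset.univ.erase e, qm M x (Function.update φ e o x)
      = ∏ x ∈ Finset.univ.erase e, qm M x (φ x) := by
    refine Finset.prod_congr rfl fun x hx => ?_
    rw [Function.update_of_ne (Finset.ne_of_mem_erase hx)]
  rw [this, Function.update_self]
  ring

/-- Resampling a single coordinate does not change expectations. -/
theorem Ex_resample (e : E) (X : (E → O) → ℝ) :
    Ex M X = Ex M (fun φ => ∑ o : O, qm M e o * X (Function.update φ e o)) := by
  have h1 : Ex M X = ∑ x : (E → O) × O, M.p x.1 * qm M e x.2 * X x.1 := by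
    rw [Fintype.sum_prod_type]
    unfold Ex
    refine Finset.sum_congr rfl fun φ _ => ?_
    simp only
    rw [← Finset.sum_mul, ← Finset.mul_sum, qm_sum, mul_one]
  have h2 : Ex M (fun φ => ∑ o : O, qm M e o * X (Function.update φ e o))
      = ∑ x : (E → O) × O, M.p x.1 * qm M e x.2 * X (Function.update x.1 e x.2) := by
    rw [Fintype.sum_prod_type]
    unfold Ex
    refine Finset.sum_congr rfl fun φ _ => ?_
    rw [Finset.mul_sum]
    exact Finset.sum_congr rfl fun o _ => by ring
  rw [h1, h2]
  have hinv : ∀ x : (E → O) × O, ((Function.update (Function.update x.1 e x.2) e (x.1 e),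
      Function.update x.1 e x.2 e) : (E → O) × O) = x := by
    rintro ⟨φ, o⟩
    simp
  refine Finset.sum_bij' (fun x _ => (Function.update x.1 e x.2, x.1 e))
    (fun x _ => (Function.update x.1 e x.2, x.1 e)) ?_ ?_ ?_ ?_ ?_
  · intros; exact Finset.mem_univ _
  · intros; exact Finset.mem_univ _
  · intro x _; exact hinv x
  · intro x _; exact hinv x
  · rintro ⟨φ, o⟩ _
    simp only [Function.update_idem, Function.update_eq_self]
    rw [p_swap]

theorem Ex_mono {X Y : (E → O) → ℝ} (h : ∀ φ, X φ ≤ Y φ) : Ex M X ≤ Ex M Y :=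
  Finset.sum_le_sum fun φ _ => mul_le_mul_of_nonneg_left (h φ) (M.p_nonneg φ)

theorem Ex_le_of_resample (e : E) {X Y : (E → O) → ℝ}
    (h : ∀ φ, ∑ o : O, qm M e o * X (Function.update φ e o)
      ≤ ∑ o : O, qm M e o * Y (Function.update φ e o)) : Ex M X ≤ Ex M Y := by
  rw [Ex_resample M e X, Ex_resample M e Y]
  exact Ex_mono M h

theorem Ex_sum {ι : Type*} (s : Finset ι) (X : ι → (E → O) → ℝ) :
    Ex M (fun φ => ∑ i ∈ s, X i φ) = ∑ i ∈ s, Ex M (X i) := by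
  unfold Ex
  simp only [Finset.mul_sum]
  exact Finset.sum_comm

theorem Ex_mul_const (X : (E → O) → ℝ) (d : ℝ) :
    Ex M (fun φ => X φ * d) = Ex M X * d := by
  unfold Ex
  rw [Finset.sum_mul]
  exact Finset.sum_congr rfl fun _ _ => by ring

theorem Ex_const_mul (X : (E → O) → ℝ) (d : ℝ) :
    Ex M (fun φ => d * X φ) = d * Ex M X := by
  unfold Ex
  rw [Finset.mul_sum]
  exact Finset.sum_congr rfl fun _ _ => by ring

theorem Ex_Fm (ψ : Sub E O) (e : E) :
    Ex M (Fm M ψ e) = ∑ o : O, qm M e o * (M.f (updateSub ψ e o) - M.f ψ) := by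
  rw [Ex_resample M e]
  unfold Ex Fm
  simp only [Function.update_self]
  rw [← Finset.sum_mul, M.p_sum, one_mul]

theorem subext_update (ψ : Sub E O) (e : E) (o : O) (h : ψ e = none) :
    subext ψ (updateSub ψ e o) := by
  intro e' o' h'
  unfold updateSub
  split_ifs with he
  · subst he; rw [h] at h'; cases h'
  · exact h'

theorem f_update_le (ψ : Sub E O) (e : E) (o : O) (h : ψ e = none) :
    M.f ψ ≤ M.f (updateSub ψ e o) := M.f_mono _ _ (subext_update ψ e o h)

/-- Extension of `ψ` by the states of the items of `S` under `φ`. -/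
def extS (ψ : Sub E O) (φ : E → O) (S : Finset E) : Sub E O :=
  fun e => if ψ e = none ∧ e ∈ S then some (φ e) else ψ e

theorem f_extS_le (ψ : Sub E O) (φ : E → O) (S : Finset E) :
    M.f (extS ψ φ S) ≤ M.f ψ + ∑ e ∈ S, if ψ e = none then Fm M ψ e φ else 0 := by
  induction S using Finset.induction_on with
  | empty =>
    have : extS ψ φ ∅ = ψ := by funext e; simp [extS]
    simp [this]
  | insert a S ha ih =>
    rw [Finset.sum_insert ha]
    by_cases hψ : ψ a = none
    · have h1 : extS ψ φ (insert a S) = updateSub (extS ψ φ S) a (φ a) := by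
        funext e
        unfold extS updateSub
        by_cases he : e = a
        · subst he; simp [hψ]
        · simp [he]
      have h2 : subext ψ (extS ψ φ S) := by
        intro e o h
        simp [extS, h]
      have h3 : extS ψ φ S a = none := by simp [extS, ha, hψ]
      have := M.f_submod ψ (extS ψ φ S) a (φ a) h2 h3
      rw [h1, if_pos hψ]
      unfold Fm at ih ⊢
      linarith
    · have h1 : extS ψ φ (insert a S) = extS ψ φ S := by
        funext e
        unfold extS
        by_cases he : e = a
        · subst he; simp [hψ]
        · simp [he]
      rw [h1, if_neg hψ]
      linarith

theorem f_full (ψ : Sub E O) (h : ∀ e, ψ e ≠ none) : M.f ψ = M.Q := by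
  choose φ hφ using fun e => Option.ne_none_iff_exists'.1 (h e)
  have : ψ = toSub φ := by funext e; simp [toSub, hφ e]
  rw [this, M.f_cover]

theorem exists_p_pos : ∃ φ, 0 < M.p φ := by
  by_contra! h
  have h1 := M.p_sum
  have h2 : ∑ φ : E → O, M.p φ ≤ 0 := Finset.sum_nonpos fun φ _ => h φ
  linarith

theorem f_le_Q (ψ : Sub E O) : M.f ψ ≤ M.Q := by
  obtain ⟨φ, _⟩ := exists_p_pos M
  have h : subext ψ (extS ψ φ Finset.univ) := by
    intro e o h
    simp [extS, h]
  have := M.f_mono _ _ h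
  rwa [f_full M (extS ψ φ Finset.univ)] at this
  intro e
  unfold extS
  split_ifs with h
  · simp
  · simpa using h

theorem greedy_pos {α : ℝ} {σ : Sub E O → E} (hσ : IsGreedy M α σ)
    (ψ : Sub E O) (hψ : M.f ψ < M.Q) : 0 < Ex M (Fm M ψ (σ ψ)) := by
  have hnn : ∀ e, ψ e = none → ∀ φ, 0 ≤ M.p φ * Fm M ψ e φ := fun e he φ =>
    mul_nonneg (M.p_nonneg φ) (sub_nonneg.2 (f_update_le M ψ e _ he))
  have h0 : 0 ≤ Ex M (Fm M ψ (σ ψ)) := 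
    Finset.sum_nonneg fun φ _ => hnn _ (hσ.1 ψ hψ) φ
  rcases h0.lt_or_eq with h | h
  · exact h
  exfalso
  have hall : ∀ e, ψ e = none → Ex M (Fm M ψ e) ≤ 0 := by
    intro e he
    have := hσ.2 ψ hψ e he
    rw [← h, mul_zero] at this
    by_contra! hp
    have := mul_pos (M.c_pos (σ ψ)) hp
    linarith
  obtain ⟨φ, hφ⟩ := exists_p_pos M
  have hF : ∀ e, ψ e = none → Fm M ψ e φ ≤ 0 := by
    intro e he
    have h1 : M.p φ * Fm M ψ e φ ≤ Ex M (Fm M ψ e) :=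
      Finset.single_le_sum (f := fun φ => M.p φ * Fm M ψ e φ)
        (fun φ _ => hnn e he φ) (Finset.mem_univ φ)
    by_contra! hp
    have := mul_pos hφ hp
    linarith [hall e he]
  have h1 := f_extS_le M ψ φ Finset.univ
  have h2 : ∑ e : E, (if ψ e = none then Fm M ψ e φ else 0) ≤ 0 := by
    refine Finset.sum_nonpos fun e _ => ?_
    split_ifs with he
    · exact hF e he
    · exact le_rfl
  rw [f_full M (extS ψ φ Finset.univ)] at h1
  · linarith
  intro e
  unfold extS
  split_ifs with h
  · simp
  · simpa using h

theorem price_nonneg {α : ℝ} {σ : Sub E O → E} (hσ : IsGreedy M α σ)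
    (ψ : Sub E O) (hψ : M.f ψ < M.Q) : 0 ≤ price M ψ (σ ψ) :=
  div_nonneg (M.c_pos _).le (greedy_pos M hσ ψ hψ).le

theorem price_mul_le {α : ℝ} {σ : Sub E O → E} (hσ : IsGreedy M α σ)
    (ψ : Sub E O) (hψ : M.f ψ < M.Q) (e : E) (he : ψ e = none) :
    price M ψ (σ ψ) * Ex M (Fm M ψ e) ≤ α * M.c e := by
  unfold price
  rw [div_mul_eq_mul_div, div_le_iff₀ (greedy_pos M hσ ψ hψ)]
  exact hσ.2 ψ hψ e he

theorem execAux_sub (π : Sub E O → E) (φ : E → O) (n : ℕ) (e : E) (o : O)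
    (h : execAux M π φ n e = some o) : o = φ e := by
  induction n with
  | zero => simp [execAux] at h
  | succ n ih =>
    simp only [execAux, stepPol] at h
    split_ifs at h with h1
    · unfold updateSub at h
      split_ifs at h with h2
      · rw [h2]; exact (Option.some.inj h).symm
      · exact ih h
    · exact ih h

theorem execAux_step (π : Sub E O → E) (hπ : IsPolicy M π) (φ : E → O) (n : ℕ) :
    subext (execAux M π φ n) (execAux M π φ (n + 1)) := by
  simp only [execAux, stepPol]
  split_ifs with h
  · exact subext_update _ _ _ (hπ _ h)
  · intro e o h; exact h

theorem execAux_mono (π : Sub E O → E) (hπ : IsPolicy M π) (φ : E → O) {m n : ℕ}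
    (h : m ≤ n) : subext (execAux M π φ m) (execAux M π φ n) := by
  induction n, h using Nat.le_induction with
  | base => intro e o h; exact h
  | succ n _ ih => intro e o h; exact execAux_step M π hπ φ n e o (ih e o h)

theorem none_of_subext {ψ ψ' : Sub E O} (h : subext ψ ψ') {e : E} (he : ψ' e = none) :
    ψ e = none := by
  cases h' : ψ e with
  | none => rfl
  | some o => rw [h e o h'] at he; cases he

/-- As long as `e` has not been selected, its state does not influence the execution. -/
theorem execAux_congr (π : Sub E O → E) (hπ : IsPolicy M π) (φ : E → O) (e : E) (o : O)
    (n : ℕ) (h : execAux M π φ n e = none) :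
    execAux M π (Function.update φ e o) n = execAux M π φ n := by
  induction n with
  | zero => rfl
  | succ n ih =>
    have h1 := ih (none_of_subext (execAux_step M π hπ φ n) h)
    simp only [execAux] at h ⊢
    rw [h1]
    unfold stepPol at h ⊢
    split_ifs at h ⊢ with h2
    · have : π (execAux M π φ n) ≠ e := by
        intro h3
        simp [updateSub, h3] at h
      rw [Function.update_of_ne this]
    · rfl

theorem execAux_congr2 (π : Sub E O → E) (hπ : IsPolicy M π) (φ : E → O) (e : E) (o o' : O)
    (n : ℕ) (h : execAux M π (Function.update φ e o) n e = none) :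
    execAux M π (Function.update φ e o') n = execAux M π (Function.update φ e o) n := by
  have := execAux_congr M π hπ (Function.update φ e o) e o' n h
  rwa [Function.update_idem] at this

theorem execAux_card (π : Sub E O → E) (hπ : IsPolicy M π) (φ : E → O) (n : ℕ)
    (h : M.f (execAux M π φ n) < M.Q) :
    n ≤ (Finset.univ.filter fun e => execAux M π φ n e ≠ none).card := by
  induction n with
  | zero => exact Nat.zero_le _
  | succ n ih =>
    have h1 : M.f (execAux M π φ n) < M.Q :=
      lt_of_le_of_lt (M.f_mono _ _ (execAux_step M π hπ φ n)) h
    refine lt_of_le_of_lt (ih h1) (Finset.card_lt_card ?_)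
    rw [Finset.ssubset_iff_of_subset]
    · refine ⟨π (execAux M π φ n), ?_, ?_⟩
      · simp [execAux, stepPol, h1, updateSub]
      · simp [hπ _ h1]
    · intro e he
      simp only [Finset.mem_filter, Finset.mem_univ, true_and] at he ⊢
      intro h2
      exact he (none_of_subext (execAux_step M π hπ φ n) h2)

theorem f_cover_eq (π : Sub E O → E) (hπ : IsPolicy M π) (φ : E → O) :
    M.f (cover M π φ) = M.Q := by
  rcases (f_le_Q M (cover M π φ)).lt_or_eq with h | h
  · have h1 := execAux_card M π hπ φ _ h
    have h2 : (Finset.univ.filter fun e => execAux M π φ (Fintype.card E) e ≠ none)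
        = Finset.univ := by
      apply Finset.eq_univ_of_card
      exact le_antisymm (Finset.card_le_univ _) h1
    refine f_full M _ fun e => ?_
    have : e ∈ (Finset.univ.filter fun e => execAux M π φ (Fintype.card E) e ≠ none) := by
      rw [h2]; exact Finset.mem_univ e
    exact (Finset.mem_filter.1 this).2
  · exact h

/-- The remaining utility is bounded by the sum of marginals over items of a cover. -/
theorem gap_le (π : Sub E O → E) (hπ : IsPolicy M π) (φ : E → O) (ψ : Sub E O)
    (hψ : ∀ e o, ψ e = some o → o = φ e) :
    M.Q - M.f ψ ≤ ∑ e : E, if cover M π φ e ≠ none ∧ ψ e = none then Fm M ψ e φ else 0 := by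
  have h1 := f_extS_le M ψ φ (Ssel M π φ)
  have h2 : subext (cover M π φ) (extS ψ φ (Ssel M π φ)) := by
    intro e o h
    have ho := execAux_sub M π φ _ e o h
    unfold extS
    split_ifs with h3
    · rw [ho]
    · cases h4 : ψ e with
      | none => exact absurd ⟨h4, by simp [Ssel, h]⟩ h3
      | some o' => rw [ho, hψ e o' h4]
  have h3 := M.f_mono _ _ h2
  rw [f_cover_eq M π hπ φ] at h3
  unfold Ssel at h1 h3
  rw [Finset.sum_filter] at h1
  simp only [ite_and]
  linarith

theorem C_eq (π : Sub E O → E) (φ : E → O) :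
    C M π φ = ∑ e : E, if cover M π φ e ≠ none then M.c e else 0 := by
  unfold C Ssel
  rw [Finset.sum_filter]

theorem cover_update (π : Sub E O → E) (hπ : IsPolicy M π) (φ : E → O) (e : E) (o : O) :
    cover M π (Function.update φ e o) e = none ↔ cover M π φ e = none := by
  constructor
  · intro h
    have := execAux_congr M π hπ (Function.update φ e o) e (φ e) _ h
    rw [Function.update_idem, Function.update_eq_self] at this
    unfold cover
    rw [this]; exact h
  · intro h
    have := execAux_congr M π hπ φ e o _ h
    unfold cover
    rw [this]; exact h

/-- The key inequality for a marker located at utility value `b`. -/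
theorem key {α : ℝ} {σ : Sub E O → E} (hσ : IsGreedy M α σ) (hα : 0 ≤ α)
    (πs : Sub E O → E) (hπs : IsPolicy M πs) (b d : ℝ) (hb : b < M.Q)
    (hd : ∀ ψ, M.f ψ ≤ b → d ≤ M.Q - M.f ψ)
    (k : (E → O) → ℕ) (hk1 : ∀ φ, M.f (execAux M σ φ (k φ)) ≤ b)
    (hk2 : ∀ φ, b < M.f (execAux M σ φ (k φ + 1))) :
    Ex M (fun φ => price M (execAux M σ φ (k φ)) (σ (execAux M σ φ (k φ)))) * d
      ≤ α * Ex M (C M πs) := by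
  rw [← Ex_mul_const, ← Ex_const_mul]
  set ψb : (E → O) → Sub E O := fun φ => execAux M σ φ (k φ) with hψb
  have hlt : ∀ φ, M.f (ψb φ) < M.Q := fun φ => lt_of_le_of_lt (hk1 φ) hb
  -- uniqueness
  have huniq : ∀ (φ : E → O) (e : E) (o o' : O), ψb (Function.update φ e o) e = none →
      ψb (Function.update φ e o') e = none →
      k (Function.update φ e o) ≤ k (Function.update φ e o') →
      ψb (Function.update φ e o) = ψb (Function.update φ e o') := by
    intro φ e o o' h h' hle
    rcases hle.lt_or_eq with hlt' | heq
    · exfalso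
      have h1 : execAux M σ (Function.update φ e o') (k (Function.update φ e o) + 1) e = none :=
        none_of_subext (execAux_mono M σ hσ.1 _ hlt') h'
      have h2 := execAux_congr2 M σ hσ.1 φ e o' o _ h1
      have h3 := hk2 (Function.update φ e o)
      rw [h2] at h3
      have h4 := M.f_mono _ _ (execAux_mono M σ hσ.1 (Function.update φ e o') hlt')
      have h5 := hk1 (Function.update φ e o')
      exact absurd (h3.trans_le h4) (not_lt.2 h5)
    · have h2 := execAux_congr2 M σ hσ.1 φ e o' o _ h'
      simp only [hψb]
      rw [heq, h2]
  have huniq' : ∀ (φ : E → O) (e : E) (o o' : O), ψb (Function.update φ e o) e = none →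
      ψb (Function.update φ e o') e = none →
      ψb (Function.update φ e o) = ψb (Function.update φ e o') := by
    intro φ e o o' h h'
    rcases le_total (k (Function.update φ e o)) (k (Function.update φ e o')) with hle | hle
    · exact huniq φ e o o' h h' hle
    · exact (huniq φ e o' o h' h hle).symm
  have hstep : Ex M (fun φ => price M (ψb φ) (σ (ψb φ)) * d) ≤
      Ex M (fun φ => ∑ e : E, if cover M πs φ e ≠ none ∧ ψb φ e = none then
        price M (ψb φ) (σ (ψb φ)) * Fm M (ψb φ) e φ else 0) := by
    refine Ex_mono M fun φ => ?_
    have h1 := gap_le M πs hπs φ (ψb φ) (execAux_sub M σ φ _)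
    have h2 := mul_le_mul_of_nonneg_left ((hd _ (hk1 φ)).trans h1)
      (price_nonneg M hσ (ψb φ) (hlt φ))
    refine h2.trans (le_of_eq ?_)
    rw [Finset.mul_sum]
    exact Finset.sum_congr rfl fun e _ => by rw [mul_ite, mul_zero]
  refine hstep.trans ?_
  have hC : (fun φ => α * C M πs φ) = fun φ => ∑ e : E,
      α * (if cover M πs φ e ≠ none then M.c e else 0) := by
    funext φ
    rw [C_eq, Finset.mul_sum]
  rw [hC, Ex_sum, Ex_sum]
  refine Finset.sum_le_sum fun e _ => ?_
  refine Ex_le_of_resample M e fun φ => ?_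
  by_cases hc : cover M πs φ e = none
  · have : ∀ o, cover M πs (Function.update φ e o) e = none := fun o =>
      (cover_update M πs hπs φ e o).2 hc
    simp [this]
  have hc' : ∀ o, cover M πs (Function.update φ e o) e ≠ none := fun o h =>
      hc ((cover_update M πs hπs φ e o).1 h)
  have hR : ∑ o : O, qm M e o * (α * (if cover M πs (Function.update φ e o) e ≠ none
      then M.c e else 0)) = α * M.c e := by
    rw [← one_mul (α * M.c e), ← qm_sum M e, Finset.sum_mul]
    exact Finset.sum_congr rfl fun o _ => by rw [if_pos (hc' o)]
  rw [hR]
  by_cases hex : ∃ o, ψb (Function.update φ e o) e = none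
  · obtain ⟨o₀, ho₀⟩ := hex
    set ψ := ψb (Function.update φ e o₀) with hψ
    have hψlt : M.f ψ < M.Q := hlt _
    refine le_trans ?_ (price_mul_le M hσ ψ hψlt e ho₀)
    rw [Ex_Fm, Finset.mul_sum]
    refine Finset.sum_le_sum fun o _ => ?_
    have hpos : 0 ≤ price M ψ (σ ψ) * (M.f (updateSub ψ e o) - M.f ψ) :=
      mul_nonneg (price_nonneg M hσ ψ hψlt) (sub_nonneg.2 (f_update_le M ψ e o ho₀))
    have hle : (if cover M πs (Function.update φ e o) e ≠ none ∧
        ψb (Function.update φ e o) e = none then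
        price M (ψb (Function.update φ e o)) (σ (ψb (Function.update φ e o))) *
          Fm M (ψb (Function.update φ e o)) e (Function.update φ e o) else 0)
        ≤ price M ψ (σ ψ) * (M.f (updateSub ψ e o) - M.f ψ) := by
      split_ifs with h
      · rw [huniq' φ e o o₀ h.2 ho₀]
        unfold Fm
        rw [Function.update_self]
      · exact hpos
    calc _ ≤ qm M e o * (price M ψ (σ ψ) * (M.f (updateSub ψ e o) - M.f ψ)) :=
          mul_le_mul_of_nonneg_left hle (qm_nonneg M e o)
      _ = _ := by ring
  · push Not at hex
    have : ∑ o : O, qm M e o * (if cover M πs (Function.update φ e o) e ≠ none ∧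
        ψb (Function.update φ e o) e = none then
        price M (ψb (Function.update φ e o)) (σ (ψb (Function.update φ e o))) *
          Fm M (ψb (Function.update φ e o)) e (Function.update φ e o) else 0) = 0 := by
      refine Finset.sum_eq_zero fun o _ => ?_
      rw [if_neg (fun h => hex o h.2), mul_zero]
    rw [this]
    exact mul_nonneg hα (M.c_pos e).le

theorem cost_path (π : Sub E O → E) (hπ : IsPolicy M π) (φ : E → O) (N : ℕ) :
    (∑ e : E, if execAux M π φ N e ≠ none then M.c e else 0)
      = ∑ n ∈ Finset.range N, if M.f (execAux M π φ n) < M.Q then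
        M.c (π (execAux M π φ n)) else 0 := by
  induction N with
  | zero => simp [execAux]
  | succ N ih =>
    rw [Finset.sum_range_succ, ← ih]
    by_cases h : M.f (execAux M π φ N) < M.Q
    · rw [if_pos h]
      have hn := hπ _ h
      have : M.c (π (execAux M π φ N))
          = ∑ e : E, if e = π (execAux M π φ N) then M.c e else 0 := by simp
      rw [this, ← Finset.sum_add_distrib]
      refine Finset.sum_congr rfl fun e _ => ?_
      simp only [execAux, stepPol, h, if_true, updateSub]
      by_cases he : e = π (execAux M π φ N)
      · rw [← he] at hn
        simp [← he, hn]
      · simp [he]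
    · simp [execAux, stepPol, h]

/-- The expected cost of greedy equals the expected revenue. -/
theorem greedy_cost {α : ℝ} {σ : Sub E O → E} (hσ : IsGreedy M α σ) :
    Ex M (C M σ) ≤ Ex M (fun φ => ∑ n ∈ Finset.range (Fintype.card E),
      if M.f (execAux M σ φ n) < M.Q then
        price M (execAux M σ φ n) (σ (execAux M σ φ n)) *
          (M.f (execAux M σ φ (n + 1)) - M.f (execAux M σ φ n)) else 0) := by
  have hC : C M σ = fun φ => ∑ n ∈ Finset.range (Fintype.card E),
      if M.f (execAux M σ φ n) < M.Q then M.c (σ (execAux M σ φ n)) else 0 := by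
    funext φ
    rw [C_eq]
    exact cost_path M σ hσ.1 φ _
  rw [hC, Ex_sum, Ex_sum]
  refine Finset.sum_le_sum fun n _ => ?_
  have hA : (fun φ => if M.f (execAux M σ φ n) < M.Q then M.c (σ (execAux M σ φ n)) else 0)
      = fun φ => ∑ e : E, if M.f (execAux M σ φ n) < M.Q ∧ σ (execAux M σ φ n) = e
        then M.c e else 0 := by
    funext φ
    simp [ite_and]
  have hB : (fun φ => if M.f (execAux M σ φ n) < M.Q then
        price M (execAux M σ φ n) (σ (execAux M σ φ n)) *
          (M.f (execAux M σ φ (n + 1)) - M.f (execAux M σ φ n)) else 0)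
      = fun φ => ∑ e : E, if M.f (execAux M σ φ n) < M.Q ∧ σ (execAux M σ φ n) = e
        then price M (execAux M σ φ n) e * Fm M (execAux M σ φ n) e φ else 0 := by
    funext φ
    by_cases h : M.f (execAux M σ φ n) < M.Q
    · simp [h, execAux, stepPol, Fm]
    · simp [h]
  rw [hA, hB, Ex_sum, Ex_sum]
  refine Finset.sum_le_sum fun e _ => ?_
  refine Ex_le_of_resample M e fun φ => ?_
  by_cases hex : ∃ o, M.f (execAux M σ (Function.update φ e o) n) < M.Q ∧
      σ (execAux M σ (Function.update φ e o) n) = e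
  · obtain ⟨o₀, h1, h2⟩ := hex
    have hn : execAux M σ (Function.update φ e o₀) n e = none := by
      have := hσ.1 _ h1
      rwa [h2] at this
    have hsame : ∀ o, execAux M σ (Function.update φ e o) n
        = execAux M σ (Function.update φ e o₀) n := fun o =>
      execAux_congr2 M σ hσ.1 φ e o₀ o n hn
    simp only [hsame]
    set ψ := execAux M σ (Function.update φ e o₀) n with hψ
    simp only [h1, h2, and_self, if_true]
    rw [← Finset.sum_mul, qm_sum, one_mul]
    have hp := greedy_pos M hσ ψ h1
    rw [h2] at hp
    have h3 : ∑ o : O, qm M e o * (price M ψ e * Fm M ψ e (Function.update φ e o))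
        = price M ψ e * Ex M (Fm M ψ e) := by
      rw [Ex_Fm, Finset.mul_sum]
      refine Finset.sum_congr rfl fun o _ => ?_
      unfold Fm
      rw [Function.update_self]
      ring
    rw [h3]
    unfold price
    rw [div_mul_cancel₀ _ hp.ne']
  · push Not at hex
    refine le_of_eq (Finset.sum_congr rfl fun o _ => ?_)
    rw [if_neg (fun h => hex o h.1 h.2), if_neg (fun h => hex o h.1 h.2)]

theorem exists_index (σ : Sub E O → E) (hσ : IsPolicy M σ) (φ : E → O) (b : ℝ) (hb0 : 0 ≤ b)
    (hb : b < M.Q) : ∃ k, M.f (execAux M σ φ k) ≤ b ∧ b < M.f (execAux M σ φ (k + 1)) := by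
  by_contra! h
  have : ∀ n, M.f (execAux M σ φ n) ≤ b := by
    intro n
    induction n with
    | zero => simpa [execAux, M.f_empty] using hb0
    | succ n ih => exact h n ih
  have h1 := this (Fintype.card E)
  have h2 := f_cover_eq M σ hσ φ
  unfold cover at h2
  linarith

/-- Price density at utility value `b`. -/
def dens (σ : Sub E O → E) (b : ℝ) : ℝ :=
  ∑ φ : E → O, ∑ n ∈ Finset.range (Fintype.card E),
    (Set.Ico (M.f (execAux M σ φ n)) (M.f (execAux M σ φ (n + 1)))).indicator
      (fun _ => M.p φ * price M (execAux M σ φ n) (σ (execAux M σ φ n))) b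

theorem dens_le {α : ℝ} {σ : Sub E O → E} (hσ : IsGreedy M α σ) (hα : 0 ≤ α)
    (πs : Sub E O → E) (hπs : IsPolicy M πs) (b d : ℝ) (hb0 : 0 ≤ b) (hb : b < M.Q) (hd0 : 0 < d)
    (hd : ∀ ψ, M.f ψ ≤ b → d ≤ M.Q - M.f ψ) :
    dens M σ b ≤ α * Ex M (C M πs) * d⁻¹ := by
  choose k hk1 hk2 using fun φ => exists_index M σ hσ.1 φ b hb0 hb
  have h := key M hσ hα πs hπs b d hb hd k hk1 hk2
  rw [← div_eq_mul_inv, le_div_iff₀ hd0]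
  refine le_trans (mul_le_mul_of_nonneg_right ?_ hd0.le) h
  unfold dens Ex
  refine Finset.sum_le_sum fun φ _ => ?_
  have hnn : 0 ≤ M.p φ * price M (execAux M σ φ (k φ)) (σ (execAux M σ φ (k φ))) :=
    mul_nonneg (M.p_nonneg φ) (price_nonneg M hσ _ ((hk1 φ).trans_lt hb))
  have hterm : ∀ n ∈ Finset.range (Fintype.card E),
      (Set.Ico (M.f (execAux M σ φ n)) (M.f (execAux M σ φ (n + 1)))).indicator
      (fun _ => M.p φ * price M (execAux M σ φ n) (σ (execAux M σ φ n))) b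
      ≤ if n = k φ then
        M.p φ * price M (execAux M σ φ (k φ)) (σ (execAux M σ φ (k φ))) else 0 := by
    intro n _
    by_cases hm : b ∈ Set.Ico (M.f (execAux M σ φ n)) (M.f (execAux M σ φ (n + 1)))
    · have : n = k φ := by
        rcases lt_trichotomy n (k φ) with h1 | h1 | h1
        · have := M.f_mono _ _ (execAux_mono M σ hσ.1 φ h1)
          exact absurd (hm.2.trans_le this) (not_lt.2 (hk1 φ))
        · exact h1
        · have := M.f_mono _ _ (execAux_mono M σ hσ.1 φ h1)
          exact absurd ((hk2 φ).trans_le this) (not_lt.2 hm.1)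
      rw [Set.indicator_of_mem hm, if_pos this, this]
    · rw [Set.indicator_of_notMem hm]
      split_ifs
      · exact hnn
      · exact le_rfl
  refine (Finset.sum_le_sum hterm).trans ?_
  rw [Finset.sum_ite_eq']
  split_ifs
  · exact le_rfl
  · exact hnn

theorem ind_int (u v w a c : ℝ) :
    IntervalIntegrable ((Set.Ico u v).indicator (fun _ => w)) MeasureTheory.volume a c := by
  have h : MeasureTheory.Integrable ((Set.Ico u v).indicator (fun _ : ℝ => w)) := by
    rw [MeasureTheory.integrable_indicator_iff measurableSet_Ico]
    exact MeasureTheory.integrableOn_const (by simp)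
  exact h.intervalIntegrable

theorem ind_integral (u v w Q : ℝ) (h0 : 0 ≤ u) (huv : u ≤ v) (hv : v ≤ Q) :
    ∫ b in (0:ℝ)..Q, (Set.Ico u v).indicator (fun _ => w) b = w * (v - u) := by
  rw [intervalIntegral.integral_of_le (h0.trans (huv.trans hv)),
    ← MeasureTheory.integral_Ico_eq_integral_Ioc,
    MeasureTheory.setIntegral_indicator measurableSet_Ico]
  have : Set.Ico 0 Q ∩ Set.Ico u v = Set.Ico u v :=
    Set.inter_eq_right.2 (Set.Ico_subset_Ico h0 hv)
  rw [this, MeasureTheory.setIntegral_const]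
  simp [huv, mul_comm]

theorem dens_int (σ : Sub E O → E) (a c : ℝ) :
    IntervalIntegrable (dens M σ) MeasureTheory.volume a c := by
  have : dens M σ = ∑ φ : E → O, ∑ n ∈ Finset.range (Fintype.card E),
    (Set.Ico (M.f (execAux M σ φ n)) (M.f (execAux M σ φ (n + 1)))).indicator
      (fun _ => M.p φ * price M (execAux M σ φ n) (σ (execAux M σ φ n))) := by
    funext b
    simp [dens, Finset.sum_apply]
  rw [this]
  exact IntervalIntegrable.sum _ fun φ _ => IntervalIntegrable.sum _ fun n _ => ind_int _ _ _ _ _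

theorem cost_le_integral {α : ℝ} {σ : Sub E O → E} (hσ : IsGreedy M α σ) :
    Ex M (C M σ) ≤ ∫ b in (0:ℝ)..M.Q, dens M σ b := by
  refine (greedy_cost M hσ).trans (le_of_eq ?_)
  unfold dens
  rw [intervalIntegral.integral_finsetSum]
  · unfold Ex
    refine Finset.sum_congr rfl fun φ _ => ?_
    rw [intervalIntegral.integral_finsetSum (fun n _ => ind_int _ _ _ _ _), Finset.mul_sum]
    refine Finset.sum_congr rfl fun n _ => ?_
    rw [ind_integral _ _ _ _ (M.f_nonneg _) (M.f_mono _ _ (execAux_step M σ hσ.1 φ n))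
      (f_le_Q M _)]
    split_ifs with h
    · ring
    · simp [execAux, stepPol, h]
  · intro φ _
    have := IntervalIntegrable.sum (μ := MeasureTheory.volume) (a := 0) (b := M.Q)
      (Finset.range (Fintype.card E))
      (f := fun n => (Set.Ico (M.f (execAux M σ φ n)) (M.f (execAux M σ φ (n + 1)))).indicator
      (fun _ => M.p φ * price M (execAux M σ φ n) (σ (execAux M σ φ n))))
      fun n _ => ind_int _ _ _ _ _
    rw [Finset.sum_fn] at this
    exact this


/-- The α-approximate adaptive greedy policy `σ` achieves approximation
factor `α (ln (Q/η) + 1)` relative to an optimal adaptive covering policy `πs`, where `η`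
is the minimum gap `Q - f ψ` over subrealizations `ψ` with `f ψ < Q`. -/
theorem greedy_approx_real
    (M : Problem E O) (α : ℝ) (hα : 1 ≤ α)
    (σ : Sub E O → E) (hσ : IsGreedy M α σ)
    (πs : Sub E O → E) (hπs : IsOptimal M πs)
    (η : ℝ)
    (hη : IsLeast {x : ℝ | ∃ ψ : Sub E O, M.f ψ < M.Q ∧ x = M.Q - M.f ψ} η) :
    Ex M (C M σ) ≤ α * (Real.log (M.Q / η) + 1) * Ex M (C M πs) := by
  obtain ⟨⟨ψ₁, hψ₁, hηeq⟩, hmin⟩ := hη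
  have hη0 : 0 < η := by rw [hηeq]; linarith
  have hηQ : η ≤ M.Q := by rw [hηeq]; linarith [M.f_nonneg ψ₁]
  have hα0 : 0 ≤ α := by linarith
  set K := α * Ex M (C M πs) with hK
  have h1 := cost_le_integral M hσ
  have hsplit : ∫ b in (0:ℝ)..M.Q, dens M σ b
      = (∫ b in (0:ℝ)..(M.Q - η), dens M σ b) + ∫ b in (M.Q - η)..M.Q, dens M σ b :=
    (intervalIntegral.integral_add_adjacent_intervals (dens_int M σ _ _)
      (dens_int M σ _ _)).symm
  have hI1 : ∫ b in (0:ℝ)..(M.Q - η), dens M σ b ≤ K * Real.log (M.Q / η) := by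
    have hval : ∫ b in (0:ℝ)..(M.Q - η), K * (M.Q - b)⁻¹ = K * Real.log (M.Q / η) := by
      rw [intervalIntegral.integral_const_mul,
        intervalIntegral.integral_comp_sub_left (fun x => x⁻¹) M.Q]
      simp only [sub_sub_cancel, sub_zero]
      rw [integral_inv_of_pos hη0 M.Q_pos]
    rw [← hval]
    refine intervalIntegral.integral_mono_on (by linarith) (dens_int M σ _ _) ?_ ?_
    · apply ContinuousOn.intervalIntegrable
      rw [Set.uIcc_of_le (by linarith)]
      refine continuousOn_const.mul (ContinuousOn.inv₀ (by fun_prop) ?_)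
      intro x hx
      have := hx.2
      linarith
    · intro b hb
      exact dens_le M hσ hα0 πs hπs.1 b (M.Q - b) hb.1 (by linarith [hb.2]) (by linarith [hb.2])
        (fun ψ h => by linarith)
  have hI2 : ∫ b in (M.Q - η)..M.Q, dens M σ b ≤ K := by
    have hval : ∫ _ in (M.Q - η)..M.Q, K * η⁻¹ = K := by
      rw [intervalIntegral.integral_const]
      simp only [sub_sub_cancel, smul_eq_mul]
      field_simp
    calc _ ≤ ∫ _ in (M.Q - η)..M.Q, K * η⁻¹ := by
          refine intervalIntegral.integral_mono_on_of_le_Ioo (by linarith) (dens_int M σ _ _)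
            intervalIntegrable_const ?_
          intro b hb
          refine dens_le M hσ hα0 πs hπs.1 b η (by linarith [hb.1]) hb.2 hη0 ?_
          intro ψ h
          exact hmin ⟨ψ, by linarith [hb.2], rfl⟩
      _ = K := hval
  calc Ex M (C M σ) ≤ K * Real.log (M.Q / η) + K := by linarith
    _ = _ := by rw [hK]; ring


end
end SSC
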